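/- Let P ∈ R[t] be expanded in Gegenbauer polynomials as P(t) = Σ_k f_k P_k^n(t) with all f_k ≥ 0 (where P_k^n is normalized so P_k^n(1) = 1). Then P(x·y), viewed as a kernel on S^{n-1}, is positive definite: for every finite C ⊂ S^{n-1} and α : C → R, Σ_{(c,c')} α(c)α(c') P(c·c') ≥ 0. -/

import Mathlib

open scoped RealInnerProductSpace

/-- The Gegenbauer polynomials `P_k^n` with parameter `n/2 - 1`, normalized so that
`P_k^n 1 = 1` (for `n = 2` these are the Chebyshev polynomials of the first kind),
defined via the standard three-term recurrence
`(k + n - 2) P_{k+2} = (2(k+1) + n - 2) t P_{k+1} - (k+1) P_k`. -/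
noncomputable def gegenbauerNormalized (n : ℕ) : ℕ → ℝ → ℝ
  | 0 => fun _ => 1
  | 1 => fun t => t
  | (k + 2) => fun t =>
      ((2 * ((k : ℝ) + 1) + (n : ℝ) - 2) * t * gegenbauerNormalized n (k + 1) t -
        ((k : ℝ) + 1) * gegenbauerNormalized n k t) / ((k : ℝ) + (n : ℝ) - 1)

open MvPolynomial in
/-- The linear form `x ↦ y · x`. -/
noncomputable def zL {n : ℕ} (y : Fin n → ℝ) : MvPolynomial (Fin n) ℝ := ∑ i, C (y i) * X i

open MvPolynomial in
/-- The squared norm. -/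
noncomputable def zR (n : ℕ) : MvPolynomial (Fin n) ℝ := ∑ i, X i * X i

open MvPolynomial in
/-- Solid zonal harmonics. -/
noncomputable def zZ {n : ℕ} (y : Fin n → ℝ) : ℕ → MvPolynomial (Fin n) ℝ
  | 0 => 1
  | 1 => zL y
  | (k + 2) => C ((k : ℝ) + n - 1)⁻¹ *
      ((2 * (k : MvPolynomial (Fin n) ℝ) + (n : MvPolynomial (Fin n) ℝ)) * (zL y * zZ y (k + 1)) -
        ((k : MvPolynomial (Fin n) ℝ) + 1) * (zR n * zZ y k))

open MvPolynomial in
/-- Directional derivative. -/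
noncomputable def zD {n : ℕ} (y : Fin n → ℝ) :
    Derivation ℝ (MvPolynomial (Fin n) ℝ) (MvPolynomial (Fin n) ℝ) := ∑ i, y i • pderiv i

open MvPolynomial in
/-- Laplacian. -/
noncomputable def zLap {n : ℕ} (p : MvPolynomial (Fin n) ℝ) : MvPolynomial (Fin n) ℝ :=
  ∑ i, pderiv i (pderiv i p)

open MvPolynomial in
/-- Fischer inner product. -/
noncomputable def zB (n : ℕ) :
    MvPolynomial (Fin n) ℝ →ₗ[ℝ] MvPolynomial (Fin n) ℝ →ₗ[ℝ] ℝ :=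
  (basisMonomials (Fin n) ℝ).constr ℝ
    (fun s => ((∏ i, (s i).factorial : ℕ) : ℝ) • lcoeff ℝ s)

section zonal
open MvPolynomial

variable {n : ℕ}

lemma zB_monomial (s : Fin n →₀ ℕ) (a : ℝ) (q : MvPolynomial (Fin n) ℝ) :
    zB n (monomial s a) q = a * ((∏ i, (s i).factorial : ℕ) : ℝ) * coeff s q := by
  have h : monomial s a = a • (basisMonomials (Fin n) ℝ s) := by
    simp [smul_monomial]
  rw [h, map_smul, zB, Module.Basis.constr_basis]
  simp [mul_assoc, lcoeff]

lemma zB_self (p : MvPolynomial (Fin n) ℝ) : 0 ≤ zB n p p := by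
  have h : zB n p p = ∑ s ∈ p.support, zB n (monomial s (coeff s p)) p := by
    rw [← LinearMap.sum_apply, ← map_sum, ← p.as_sum]
  rw [h]
  refine Finset.sum_nonneg fun s _ => ?_
  rw [zB_monomial, mul_right_comm]
  exact mul_nonneg (mul_self_nonneg _) (Nat.cast_nonneg _)

lemma zB_X_mul (i : Fin n) (p q : MvPolynomial (Fin n) ℝ) :
    zB n (X i * p) q = zB n p (pderiv i q) := by
  induction p using MvPolynomial.induction_on' with
  | add p r hp hr => simp [mul_add, hp, hr]
  | monomial s a =>
    have h : X i * monomial s a = monomial (s + Finsupp.single i 1) a := by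
      rw [mul_comm, X, monomial_mul, mul_one]
    rw [h, zB_monomial, zB_monomial, coeff_pderiv]
    have : (∏ j, ((s + Finsupp.single i 1 : Fin n →₀ ℕ) j).factorial) = (∏ j, (s j).factorial) * (s i + 1) := by
      rw [← Finset.mul_prod_erase _ _ (Finset.mem_univ i),
        ← Finset.mul_prod_erase _ (fun j => (s j).factorial) (Finset.mem_univ i)]
      have : ∏ x ∈ Finset.univ.erase i, ((s + Finsupp.single i 1 : Fin n →₀ ℕ) x).factorial
          = ∏ x ∈ Finset.univ.erase i, (s x).factorial := by
        refine Finset.prod_congr rfl fun x hx => ?_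
        have := Finset.ne_of_mem_erase hx
        simp [Finsupp.single_apply, this.symm]
      rw [this]
      simp [Nat.factorial_succ]
      ring
    rw [this]
    push_cast
    ring

lemma zD_apply (y : Fin n → ℝ) (p : MvPolynomial (Fin n) ℝ) :
    zD y p = ∑ i, C (y i) * pderiv i p := by
  have : zD y p = ∑ i, (y i • pderiv i) p := by
    rw [zD, ← Derivation.coeFnAddMonoidHom_apply, map_sum, Finset.sum_apply]; rfl
  rw [this]
  simp [smul_eq_C_mul]

lemma zB_L_mul (y : Fin n → ℝ) (p q : MvPolynomial (Fin n) ℝ) :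
    zB n (zL y * p) q = zB n p (zD y q) := by
  rw [zL, zD_apply, Finset.sum_mul, map_sum, LinearMap.sum_apply, map_sum]
  refine Finset.sum_congr rfl fun i _ => ?_
  rw [mul_assoc, ← smul_eq_C_mul, ← smul_eq_C_mul, map_smul, map_smul, LinearMap.smul_apply,
    zB_X_mul]

lemma zB_R_mul (p q : MvPolynomial (Fin n) ℝ) :
    zB n (zR n * p) q = zB n p (zLap q) := by
  rw [zR, zLap, Finset.sum_mul, map_sum, LinearMap.sum_apply, map_sum]
  refine Finset.sum_congr rfl fun i _ => ?_
  rw [mul_assoc, zB_X_mul, zB_X_mul]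

lemma zB_L_pow (y : Fin n → ℝ) (k : ℕ) : ∀ p : MvPolynomial (Fin n) ℝ, p.IsHomogeneous k →
    zB n (zL y ^ k) p = (k.factorial : ℝ) * eval y p := by
  induction k with
  | zero =>
    intro p hp
    have h0 : p.totalDegree = 0 := (totalDegree_zero_iff_isHomogeneous _).2 hp
    rw [totalDegree_eq_zero_iff_eq_C] at h0
    have : (zL y ^ 0) = monomial (0 : Fin n →₀ ℕ) (1 : ℝ) := by simp
    rw [this, zB_monomial]
    conv_rhs => rw [h0]
    simp
  | succ k ih =>
    intro p hp
    rw [pow_succ', zB_L_mul, ih]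
    · have h1 := congrArg (eval y) hp.sum_X_mul_pderiv
      have : eval y (zD y p) = (k + 1 : ℕ) * eval y p := by
        rw [zD_apply]
        simpa using h1
      rw [this, Nat.factorial_succ]
      push_cast
      ring
    · rw [zD_apply]
      refine IsHomogeneous.sum _ _ _ fun i _ => ?_
      exact (hp.pderiv (i := i)).C_mul (y i)

lemma zL_hom (y : Fin n → ℝ) : (zL y).IsHomogeneous 1 :=
  IsHomogeneous.sum _ _ _ fun i _ => isHomogeneous_C_mul_X _ _

lemma zR_hom : (zR n).IsHomogeneous 2 :=
  IsHomogeneous.sum _ _ _ fun i _ => (isHomogeneous_X _ i).mul (isHomogeneous_X _ i)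

lemma natC (m : ℕ) : (m : MvPolynomial (Fin n) ℝ) = C (m : ℝ) := by simp

lemma zZ_hom (y : Fin n → ℝ) (k : ℕ) : (zZ y k).IsHomogeneous k := by
  induction k using Nat.strong_induction_on with
  | _ k ih =>
    match k with
    | 0 => rw [zZ]; exact isHomogeneous_one _ _
    | 1 => rw [zZ]; exact zL_hom y
    | k + 2 =>
      rw [zZ]
      refine IsHomogeneous.C_mul (IsHomogeneous.sub ?_ ?_) _
      · have := ((zL_hom y).mul (ih (k+1) (by omega))).C_mul (2 * (k : ℝ) + n)
        rw [show (1 + (k + 1)) = k + 2 by ring] at this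
        simpa only [map_add, map_mul, map_natCast, map_ofNat, map_one] using this
      · have := ((zR_hom).mul (ih k (by omega))).C_mul ((k : ℝ) + 1)
        rw [show (2 + k) = k + 2 by ring] at this
        simpa only [map_add, map_mul, map_natCast, map_ofNat, map_one] using this

lemma zpos (hn : 2 ≤ n) (k : ℕ) : 0 < (k : ℝ) + n - 1 := by
  have : (2 : ℝ) ≤ n := by exact_mod_cast hn
  have : (0 : ℝ) ≤ k := Nat.cast_nonneg k
  linarith

lemma zZ_rec (hn : 2 ≤ n) (y : Fin n → ℝ) (k : ℕ) :
    ((k : MvPolynomial (Fin n) ℝ) + (n : MvPolynomial (Fin n) ℝ) - 1) * zZ y (k + 2) =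
      ((2 * (k : MvPolynomial (Fin n) ℝ) + (n : MvPolynomial (Fin n) ℝ)) * (zL y * zZ y (k + 1)) -
        ((k : MvPolynomial (Fin n) ℝ) + 1) * (zR n * zZ y k)) := by
  have h : ((k : MvPolynomial (Fin n) ℝ) + (n : MvPolynomial (Fin n) ℝ) - 1) = C ((k : ℝ) + n - 1) := by simp
  rw [zZ, h, ← mul_assoc, ← C_mul, mul_inv_cancel₀ (zpos hn k).ne']
  simp

lemma zcancel (hn : 2 ≤ n) (k : ℕ) : ((k : MvPolynomial (Fin n) ℝ) + (n : MvPolynomial (Fin n) ℝ) - 1) ≠ 0 := by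
  have h : ((k : MvPolynomial (Fin n) ℝ) + (n : MvPolynomial (Fin n) ℝ) - 1) = C ((k : ℝ) + n - 1) := by simp
  rw [h, Ne, C_eq_zero]
  exact (zpos hn k).ne'

lemma zD_X (y : Fin n → ℝ) (i : Fin n) : zD y (X i) = C (y i) := by
  classical
  rw [zD_apply]
  simp [pderiv_X, Pi.single_apply]

lemma zD_L (y : Fin n → ℝ) (hy : ∑ i, y i * y i = 1) : zD y (zL y) = 1 := by
  rw [zL, map_sum]
  have : ∀ i, zD y (C (y i) * X i) = C (y i * y i) := fun i => by
    rw [← smul_eq_C_mul, Derivation.map_smul, zD_X, smul_eq_C_mul, C_mul]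
  simp_rw [this]
  rw [← map_sum, hy, C_1]

lemma zD_R (y : Fin n → ℝ) : zD y (zR n) = 2 * zL y := by
  rw [zR, map_sum, zL, Finset.mul_sum]
  refine Finset.sum_congr rfl fun i _ => ?_
  rw [Derivation.leibniz, zD_X, smul_eq_mul]
  ring

lemma zD_Z (hn : 2 ≤ n) (y : Fin n → ℝ) (hy : ∑ i, y i * y i = 1) (k : ℕ) :
    zD y (zZ y (k + 1)) = ((k : MvPolynomial (Fin n) ℝ) + 1) * zZ y k := by
  have hnat : ∀ m : ℕ, zD y (m : MvPolynomial (Fin n) ℝ) = 0 := fun m =>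
    Derivation.map_natCast _ _
  have hstep : ∀ k : ℕ, ((k : MvPolynomial (Fin n) ℝ) + (n : MvPolynomial (Fin n) ℝ) - 1) * zD y (zZ y (k + 2)) =
      (2 * (k : MvPolynomial (Fin n) ℝ) + (n : MvPolynomial (Fin n) ℝ)) * (zZ y (k+1) + zL y * zD y (zZ y (k + 1))) -
        ((k : MvPolynomial (Fin n) ℝ) + 1) * (2 * zL y * zZ y k + zR n * zD y (zZ y k)) := by
    intro k
    have h := congrArg (zD y) (zZ_rec hn y k)
    have h2 : zD y (2 : MvPolynomial (Fin n) ℝ) = 0 := hnat 2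
    simp only [Derivation.leibniz, map_sub, map_add, smul_eq_mul, hnat, h2, zD_L y hy, zD_R,
      Derivation.map_one_eq_zero] at h
    linear_combination h
  induction k using Nat.strong_induction_on with
  | _ k ih =>
    match k with
    | 0 => simp [zZ, zD_L y hy]
    | 1 =>
      refine mul_left_cancel₀ (zcancel hn 0) ?_
      have h := hstep 0
      have e0 : zZ y 0 = 1 := rfl
      have e1 : zZ y 1 = zL y := rfl
      simp only [e0, e1, zero_add, zD_L y hy, Derivation.map_one_eq_zero] at h ⊢
      rw [h]
      push_cast
      ring
    | k + 2 =>
      refine mul_left_cancel₀ (zcancel hn (k+1)) ?_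
      have h := hstep (k+1)
      have i1 := ih (k+1) (by omega)
      have i0 := ih k (by omega)
      have r := zZ_rec hn y k
      rw [i1, i0] at h
      rw [h]
      push_cast at *
      linear_combination (-(k : MvPolynomial (Fin n) ℝ) - 2) * r

lemma zLap_L_mul (y : Fin n → ℝ) (p : MvPolynomial (Fin n) ℝ) :
    zLap (zL y * p) = zL y * zLap p + 2 * zD y p := by
  classical
  have hL : ∀ i, pderiv i (zL y) = C (y i) := fun i => by
    rw [zL, map_sum]
    simp [pderiv_X, Pi.single_apply]
  rw [zLap, zLap, zD_apply, Finset.mul_sum, Finset.mul_sum, ← Finset.sum_add_distrib]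
  refine Finset.sum_congr rfl fun i _ => ?_
  simp only [pderiv_mul, map_add, hL, pderiv_C]
  ring

lemma zLap_R_mul (k : ℕ) (p : MvPolynomial (Fin n) ℝ) (hp : p.IsHomogeneous k) :
    zLap (zR n * p) = zR n * zLap p + (4 * (k : MvPolynomial (Fin n) ℝ) + 2 * (n : MvPolynomial (Fin n) ℝ)) * p := by
  classical
  have hR : ∀ i, pderiv i (zR n) = 2 * X i := fun i => by
    rw [zR, map_sum]
    simp [pderiv_X, Pi.single_apply, Finset.sum_add_distrib, two_mul]
  have hE := hp.sum_X_mul_pderiv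
  have h2 : ∀ i : Fin n, pderiv i (2 : MvPolynomial (Fin n) ℝ) = 0 := fun i =>
    Derivation.map_natCast (pderiv i) 2
  have : zLap (zR n * p) = zR n * zLap p + 4 * (∑ i, X i * pderiv i p) + ∑ i : Fin n, 2 * p := by
    rw [zLap, zLap, Finset.mul_sum, Finset.mul_sum, ← Finset.sum_add_distrib,
      ← Finset.sum_add_distrib]
    refine Finset.sum_congr rfl fun i _ => ?_
    simp only [pderiv_mul, map_add, hR, pderiv_X_self, h2]
    ring
  rw [this, hE]
  simp
  ring

lemma zLap_add (p q : MvPolynomial (Fin n) ℝ) : zLap (p + q) = zLap p + zLap q := by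
  simp [zLap, Finset.sum_add_distrib]

lemma zLap_C_mul (a : ℝ) (p : MvPolynomial (Fin n) ℝ) : zLap (C a * p) = C a * zLap p := by
  simp [zLap, Finset.mul_sum, pderiv_C_mul]

lemma zLap_sum {ι : Type*} (s : Finset ι) (g : ι → MvPolynomial (Fin n) ℝ) :
    zLap (∑ j ∈ s, g j) = ∑ j ∈ s, zLap (g j) := by
  simp only [zLap, map_sum]
  exact Finset.sum_comm

lemma zLap_Z (hn : 2 ≤ n) (y : Fin n → ℝ) (hy : ∑ i, y i * y i = 1) (k : ℕ) :
    zLap (zZ y k) = 0 := by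
  induction k using Nat.strong_induction_on with
  | _ k ih =>
    match k with
    | 0 => simp [zZ, zLap]
    | 1 =>
      have := zLap_L_mul y 1
      simpa [zZ, zLap] using this
    | k + 2 =>
      have e : zZ y (k+2) = C ((k : ℝ) + n - 1)⁻¹ * (C (2 * (k : ℝ) + n) * (zL y * zZ y (k + 1)) +
        C (-((k : ℝ) + 1)) * (zR n * zZ y k)) := by
        rw [zZ]; simp only [map_add, map_neg, map_mul, map_natCast, map_ofNat, map_one]; ring
      rw [e, zLap_C_mul, zLap_add, zLap_C_mul, zLap_C_mul, zLap_L_mul,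
        zLap_R_mul k _ (zZ_hom y k), ih k (by omega), ih (k+1) (by omega), zD_Z hn y hy]
      simp only [map_add, map_neg, map_mul, map_natCast, map_ofNat, map_one]
      push_cast
      ring

lemma zZ_lead (hn : 2 ≤ n) (k : ℕ) : ∃ a : ℝ, 0 < a ∧ ∀ y : Fin n → ℝ,
    ∃ q, zZ y k = C a * zL y ^ k + zR n * q := by
  induction k using Nat.strong_induction_on with
  | _ k ih =>
    match k with
    | 0 => exact ⟨1, one_pos, fun y => ⟨0, by simp [zZ]⟩⟩
    | 1 => exact ⟨1, one_pos, fun y => ⟨0, by simp [zZ]⟩⟩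
    | k + 2 =>
      obtain ⟨a, ha, h⟩ := ih (k+1) (by omega)
      have hp := zpos hn k
      have hn0 : (0 : ℝ) < n := by exact_mod_cast (by omega : 0 < n)
      refine ⟨((k : ℝ) + n - 1)⁻¹ * (2 * k + n) * a, by positivity, fun y => ?_⟩
      obtain ⟨q, hq⟩ := h y
      refine ⟨C ((k : ℝ) + n - 1)⁻¹ * ((2 * (k : MvPolynomial (Fin n) ℝ) + (n : MvPolynomial (Fin n) ℝ)) * (zL y * q) -
        ((k : MvPolynomial (Fin n) ℝ) + 1) * zZ y k), ?_⟩
      rw [zZ, hq]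
      simp only [C_mul, map_add, map_natCast, map_ofNat]
      ring

lemma zZ_eval (y z : Fin n → ℝ) (hz : ∑ i, z i * z i = 1) (k : ℕ) :
    eval z (zZ y k) = gegenbauerNormalized n k (∑ i, y i * z i) := by
  have hL : eval z (zL y) = ∑ i, y i * z i := by simp [zL]
  have hR : eval z (zR n) = 1 := by simp [zR, hz]
  induction k using Nat.strong_induction_on with
  | _ k ih =>
    match k with
    | 0 => simp [zZ, gegenbauerNormalized]
    | 1 => simp [zZ, gegenbauerNormalized, hL]
    | k + 2 =>
      rw [zZ, gegenbauerNormalized]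
      beta_reduce
      rw [← ih k (by omega), ← ih (k+1) (by omega)]
      simp only [map_mul, map_sub, map_add, hL, hR, eval_C, map_natCast, map_ofNat, map_one]
      ring

lemma gegen_posdef (hn : 2 ≤ n) (k : ℕ) {ι : Type*} (S : Finset ι) (v : ι → Fin n → ℝ)
    (α : ι → ℝ) (hv : ∀ c ∈ S, ∑ i, v c i * v c i = 1) :
    0 ≤ ∑ c ∈ S, ∑ c' ∈ S, α c * α c' * gegenbauerNormalized n k (∑ i, v c i * v c' i) := by
  obtain ⟨a, ha, h⟩ := zZ_lead hn k
  set F : MvPolynomial (Fin n) ℝ := ∑ c ∈ S, C (α c) * zZ (v c) k with hF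
  have hhom : F.IsHomogeneous k := IsHomogeneous.sum _ _ _ fun c _ => (zZ_hom _ k).C_mul _
  have hharm : zLap F = 0 := by
    rw [hF, zLap_sum]
    exact Finset.sum_eq_zero fun c hc => by rw [zLap_C_mul, zLap_Z hn _ (hv c hc), mul_zero]
  have hB : ∀ c, zB n (zZ (v c) k) F = a * k.factorial * eval (v c) F := by
    intro c
    obtain ⟨q, hq⟩ := h (v c)
    rw [hq, map_add, LinearMap.add_apply, zB_R_mul, hharm, map_zero, ← smul_eq_C_mul, map_smul,
      LinearMap.smul_apply, zB_L_pow _ _ _ hhom, smul_eq_mul]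
    ring
  have hFF : zB n F F = a * k.factorial * ∑ c ∈ S, α c * eval (v c) F := by
    have e : zB n F F = ∑ c ∈ S, zB n (C (α c) * zZ (v c) k) F := by
      rw [← LinearMap.sum_apply, ← map_sum, ← hF]
    rw [e, Finset.mul_sum]
    refine Finset.sum_congr rfl fun c _ => ?_
    rw [← smul_eq_C_mul, map_smul, LinearMap.smul_apply, hB, smul_eq_mul]
    ring
  have hpos : 0 < a * (k.factorial : ℝ) := mul_pos ha (by exact_mod_cast k.factorial_pos)
  have h0 : 0 ≤ ∑ c ∈ S, α c * eval (v c) F :=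
    nonneg_of_mul_nonneg_right (hFF ▸ zB_self F) hpos
  refine h0.trans_eq ?_
  rw [Finset.sum_comm]
  refine Finset.sum_congr rfl fun c hc => ?_
  rw [hF, map_sum, Finset.mul_sum]
  refine Finset.sum_congr rfl fun c' _ => ?_
  rw [map_mul, eval_C, zZ_eval _ _ (hv c hc)]
  ring

end zonal

theorem schoenberg_posdef (n : ℕ) (hn : 2 ≤ n) (d : ℕ)
    (f : ℕ → ℝ) (hf : ∀ k, 0 ≤ f k)
    (P : ℝ → ℝ)
    (hP : ∀ t, P t = ∑ k ∈ Finset.range (d + 1), f k * gegenbauerNormalized n k t) :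
    ∀ (C : Finset (EuclideanSpace ℝ (Fin n))) (α : EuclideanSpace ℝ (Fin n) → ℝ),
      (∀ c ∈ C, ‖c‖ = 1) →
      0 ≤ ∑ c ∈ C, ∑ c' ∈ C, α c * α c' * P ⟪c, c'⟫ := by
  intro S α hS
  have hin : ∀ c c' : EuclideanSpace ℝ (Fin n), ⟪c, c'⟫ = ∑ i, c i * c' i := fun c c' => by
    rw [PiLp.inner_apply]
    exact Finset.sum_congr rfl fun i _ => by simp [mul_comm]
  have h1 : ∀ c ∈ S, ∑ i, c i * c i = 1 := fun c hc => by
    rw [← hin, real_inner_self_eq_norm_sq, hS c hc, one_pow]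
  have key : ∑ c ∈ S, ∑ c' ∈ S, α c * α c' * P ⟪c, c'⟫ =
      ∑ k ∈ Finset.range (d + 1), f k * ∑ c ∈ S, ∑ c' ∈ S,
        α c * α c' * gegenbauerNormalized n k (∑ i, c i * c' i) := by
    simp_rw [Finset.mul_sum]
    rw [Finset.sum_comm]
    rw [Finset.sum_comm]
    rw [Finset.sum_comm (s := Finset.range (d + 1))]
    refine Finset.sum_congr rfl fun c _ => ?_
    rw [Finset.sum_comm (s := Finset.range (d + 1))]
    refine Finset.sum_congr rfl fun c' _ => ?_
    rw [hP, hin, Finset.mul_sum]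
    exact Finset.sum_congr rfl fun k _ => by ring
  rw [key]
  exact Finset.sum_nonneg fun k _ => mul_nonneg (hf k)
    (gegen_posdef hn k S (fun c i => c i) α h1)
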